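/- arXiv:2401.08929 — 2 statements merged into one kernel-verified Lean document; each statement's English description precedes it below -/
import Mathlib

section
/- Assume ε_i > 0 for every i ∈ M. Then the game 𝒢(a_0,b) is an ordinal potential game: there exists a function Φ : ∏_{i∈M} S_i(b) → ℝ such that for every firm i, every profile a_{−i} of the other firms' strategies, and every a_i, a_i' ∈ S_i(b), one has π_i(a_i,a_{−i}) − π_i(a_i',a_{−i}) > 0 if and only if Φ(a_i,a_{−i}) − Φ(a_i',a_{−i}) > 0. Moreover, 𝒢(a_0,b) admits at least one Nash equilibrium. -/
/-! The `i`-th column of `I − Ã_M` is the only one that involves the strategy `a_i`. By Cramer's rule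
`v_i(a) = N_i / det (I − Ã_M)`, where `N_i` is the determinant of `I − Ã_M` with column `i` replaced
by `a_0`, so `N_i` depends on `a_{-i}` only. For feasible `a` the matrix `Ã_M` is nonnegative with
column sums `1 − b_{i,0} < 1`, so `det (I − Ã_M) > 0` (diagonal dominance and a homotopy to `I`), and
`v = a_0 + Ã_M v` is entrywise positive; hence `N_i > 0` as well. Every firm thus
wants to make the same quantity `det (I − Ã_M)` small: its negative is an ordinal potential, and a
minimizer over the compact nonempty set of feasible profiles is a Nash equilibrium. -/

/-!
Production network game 𝒢(a_0,b). Firms M = `Fin m`, categories `Fin l`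
with surjective category map `cat` (so every category is nonempty).
`a0 i` = a_{0,i}, `b0 i` = b_{i,0}, `b i ℓ` = b_{i,ℓ}, `eps` = ε.
A strategy of firm i is the vector of its input weights towards firms
(the labor weight being fixed to b_{i,0}); `Strat` is S_i(b).
`AtM a` is Ã_M with (Ã_M)_{j,i} = a_{i,j} + ε_i a_{0,j},
`payoff i a` = π_i(a) = ε_i ((I − Ã_M)⁻¹ a_0)_i.

STATEMENT 2: if ε_i > 0 for all i, the game is an ordinal potential game and
admits at least one Nash equilibrium.
-/

noncomputable section

open Matrix Finset

/-- Strategy set S_i(b): nonnegative weights summing to b_{i,ℓ} inside each category ℓ. -/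
def Strat (m l : ℕ) (cat : Fin m → Fin l) (b : Fin m → Fin l → ℝ) (i : Fin m) :
    Set (Fin m → ℝ) :=
  { x | (∀ j, 0 ≤ x j) ∧
        ∀ ℓ : Fin l, ∑ j ∈ univ.filter (fun j => cat j = ℓ), x j = b i ℓ }

/-- ε_i := 1 − b_{i,0} − Σ_ℓ b_{i,ℓ}. -/
def eps (m l : ℕ) (b0 : Fin m → ℝ) (b : Fin m → Fin l → ℝ) (i : Fin m) : ℝ :=
  1 - b0 i - ∑ ℓ, b i ℓ

/-- The matrix Ã_M: (Ã_M)_{j,i} = a_{i,j} + ε_i a_{0,j}. -/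
def AtM (m l : ℕ) (a0 b0 : Fin m → ℝ) (b : Fin m → Fin l → ℝ)
    (a : Fin m → Fin m → ℝ) : Matrix (Fin m) (Fin m) ℝ :=
  Matrix.of fun j i => a i j + eps m l b0 b i * a0 j

/-- Payoff π_i(a) = ε_i v_i(a), with v(a) = (I − Ã_M)⁻¹ a_0. -/
def payoff (m l : ℕ) (a0 b0 : Fin m → ℝ) (b : Fin m → Fin l → ℝ)
    (i : Fin m) (a : Fin m → Fin m → ℝ) : ℝ :=
  eps m l b0 b i * ((1 - AtM m l a0 b0 b a)⁻¹.mulVec a0 i)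

/-- A nonnegative matrix with column sums below `1` satisfies `det (1 - A) > 0`. -/
lemma det_one_sub_pos {n : ℕ} (A : Matrix (Fin n) (Fin n) ℝ) (hA : ∀ j i, 0 ≤ A j i)
    (hs : ∀ i, ∑ j, A j i < 1) : 0 < (1 - A).det := by
  have hne : ∀ t ∈ Set.Icc (0 : ℝ) 1, (1 - t • A).det ≠ 0 := by
    intro t ht
    apply det_ne_zero_of_sum_col_lt_diag
    intro k
    have h1 : ∑ i ∈ univ.erase k, ‖(1 - t • A) i k‖ = ∑ i ∈ univ.erase k, t * A i k := by
      refine Finset.sum_congr rfl fun i hi => ?_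
      have hik : i ≠ k := Finset.ne_of_mem_erase hi
      simp [hik, abs_of_nonneg ht.1, abs_of_nonneg (hA i k)]
    have h2 : t * A k k + ∑ i ∈ univ.erase k, t * A i k = t * ∑ i, A i k := by
      rw [Finset.mul_sum]
      exact Finset.add_sum_erase univ (fun i => t * A i k) (Finset.mem_univ k)
    have h3 : t * ∑ i, A i k < 1 := by
      have h0 : 0 ≤ ∑ i, A i k := Finset.sum_nonneg fun i _ => hA i k
      nlinarith [ht.2, hs k]
    have h4 : 1 - t * A k k ≤ ‖(1 - t • A) k k‖ := by
      simpa using le_abs_self (1 - t * A k k)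
    linarith
  by_contra hcon
  have hc : ContinuousOn (fun t : ℝ => (1 - t • A).det) (Set.Icc 0 1) := by
    apply Continuous.continuousOn
    fun_prop
  obtain ⟨t, ht, h0⟩ := intermediate_value_Icc' zero_le_one hc
    (show (0 : ℝ) ∈ Set.Icc _ _ from ⟨by simpa using hcon, by simp⟩)
  exact hne t ht h0

/-- Monotonicity of the Leontief inverse: for a nonnegative `A` with column sums below `1`, a positive
right-hand side has a positive solution. Summing the negative parts of `v = c + A v` over all
coordinates shows that they vanish. -/
lemma solution_pos {n : ℕ} (A : Matrix (Fin n) (Fin n) ℝ) (hA : ∀ j i, 0 ≤ A j i)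
    (hs : ∀ i, ∑ j, A j i < 1) (c v : Fin n → ℝ) (hc : ∀ i, 0 < c i)
    (hv : ∀ j, v j = c j + ∑ i, A j i * v i) (i : Fin n) : 0 < v i := by
  have hneg : ∀ j, (v j)⁻ ≤ ∑ i, A j i * (v i)⁻ := by
    intro j
    have h0 : 0 ≤ ∑ i, A j i * (v i)⁻ :=
      Finset.sum_nonneg fun i _ => mul_nonneg (hA j i) (negPart_nonneg _)
    have h1 : -∑ i, A j i * v i ≤ ∑ i, A j i * (v i)⁻ := by
      rw [← Finset.sum_neg_distrib]
      refine Finset.sum_le_sum fun i _ => ?_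
      rw [← mul_neg]
      exact mul_le_mul_of_nonneg_left (neg_le_negPart _) (hA j i)
    rw [negPart_def]
    refine sup_le ?_ h0
    linarith [hv j, hc j]
  have hsum : ∑ j, (v j)⁻ ≤ ∑ i, (∑ j, A j i) * (v i)⁻ := by
    calc ∑ j, (v j)⁻ ≤ ∑ j, ∑ i, A j i * (v i)⁻ := Finset.sum_le_sum fun j _ => hneg j
      _ = ∑ i, (∑ j, A j i) * (v i)⁻ := by
        rw [Finset.sum_comm]
        simp only [Finset.sum_mul]
  have hz : ∀ i, (v i)⁻ = 0 := by
    have hnn : ∀ i ∈ univ, 0 ≤ (1 - ∑ j, A j i) * (v i)⁻ := fun i _ =>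
      mul_nonneg (by linarith [hs i]) (negPart_nonneg _)
    have h : ∑ i, (1 - ∑ j, A j i) * (v i)⁻ = 0 := by
      refine le_antisymm ?_ (Finset.sum_nonneg hnn)
      simp only [sub_mul, one_mul, Finset.sum_sub_distrib]
      linarith
    intro i
    have hi := (Finset.sum_eq_zero_iff_of_nonneg hnn).1 h i (Finset.mem_univ i)
    exact (mul_eq_zero.1 hi).resolve_left (by linarith [hs i])
  rw [hv i]
  exact add_pos_of_pos_of_nonneg (hc i) <|
    Finset.sum_nonneg fun k _ => mul_nonneg (hA i k) (negPart_eq_zero.1 (hz k))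

lemma inv_mulVec_eq_cramer_div {n : ℕ} (B : Matrix (Fin n) (Fin n) ℝ) (c : Fin n → ℝ) (i : Fin n) :
    (B⁻¹.mulVec c) i = (B.updateCol i c).det / B.det := by
  rw [← cramer_apply, cramer_eq_adjugate_mulVec, Matrix.inv_def, smul_mulVec, Ring.inverse_eq_inv',
    Pi.smul_apply, smul_eq_mul, div_eq_inv_mul]

lemma AtM_nonneg (m l : ℕ) (cat : Fin m → Fin l) (a0 : Fin m → ℝ) (ha0 : ∀ i, 0 < a0 i)
    (b0 : Fin m → ℝ) (b : Fin m → Fin l → ℝ) (heps : ∀ i, 0 < eps m l b0 b i)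
    (a : Fin m → Fin m → ℝ) (ha : ∀ j, a j ∈ Strat m l cat b j) (j i : Fin m) :
    0 ≤ AtM m l a0 b0 b a j i :=
  add_nonneg ((ha i).1 j) (mul_pos (heps i) (ha0 j)).le

lemma AtM_col_sum (m l : ℕ) (cat : Fin m → Fin l) (a0 : Fin m → ℝ) (ha0sum : ∑ i, a0 i = 1)
    (b0 : Fin m → ℝ) (b : Fin m → Fin l → ℝ)
    (a : Fin m → Fin m → ℝ) (ha : ∀ j, a j ∈ Strat m l cat b j) (i : Fin m) :
    ∑ j, AtM m l a0 b0 b a j i = 1 - b0 i := by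
  have h : ∑ j, a i j = ∑ ℓ, b i ℓ := by
    rw [← Finset.sum_fiberwise univ cat]
    exact Finset.sum_congr rfl fun ℓ _ => (ha i).2 ℓ
  simp only [AtM, of_apply, Finset.sum_add_distrib, ← Finset.mul_sum, ha0sum, h, eps]
  ring

/-- The numerator in Cramer's rule for `v_i` does not depend on the strategy of firm `i`. -/
lemma updateCol_AtM_update (m l : ℕ) (a0 b0 : Fin m → ℝ) (b : Fin m → Fin l → ℝ)
    (a : Fin m → Fin m → ℝ) (i : Fin m) (x c : Fin m → ℝ) :
    (1 - AtM m l a0 b0 b (Function.update a i x)).updateCol i c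
      = (1 - AtM m l a0 b0 b a).updateCol i c := by
  ext j k
  by_cases hk : k = i
  · subst hk; simp
  · simp [hk, AtM]

lemma numerator_pos (m l : ℕ) (cat : Fin m → Fin l) (a0 : Fin m → ℝ) (ha0 : ∀ i, 0 < a0 i)
    (ha0sum : ∑ i, a0 i = 1) (b0 : Fin m → ℝ) (hb0 : ∀ i, 0 < b0 i)
    (b : Fin m → Fin l → ℝ) (heps : ∀ i, 0 < eps m l b0 b i)
    (a : Fin m → Fin m → ℝ) (ha : ∀ j, a j ∈ Strat m l cat b j) (i : Fin m) :
    0 < ((1 - AtM m l a0 b0 b a).updateCol i a0).det := by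
  have hA := AtM_nonneg m l cat a0 ha0 b0 b heps a ha
  have hs : ∀ i, ∑ j, AtM m l a0 b0 b a j i < 1 := fun i => by
    rw [AtM_col_sum m l cat a0 ha0sum b0 b a ha i]
    linarith [hb0 i]
  have hd := det_one_sub_pos _ hA hs
  have hv : (1 - AtM m l a0 b0 b a).mulVec ((1 - AtM m l a0 b0 b a)⁻¹.mulVec a0) = a0 := by
    rw [mulVec_mulVec, mul_nonsing_inv _ hd.ne'.isUnit, one_mulVec]
  have hpos := solution_pos _ hA hs a0 ((1 - AtM m l a0 b0 b a)⁻¹.mulVec a0) ha0 (fun j => by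
    have h := congrFun hv j
    rw [sub_mulVec, one_mulVec, Pi.sub_apply] at h
    exact sub_eq_iff_eq_add.1 h) i
  rw [inv_mulVec_eq_cramer_div] at hpos
  exact (div_pos_iff_of_pos_right hd).1 hpos

lemma isCompact_Strat (m l : ℕ) (cat : Fin m → Fin l) (b : Fin m → Fin l → ℝ) (i : Fin m) :
    IsCompact (Strat m l cat b i) := by
  refine IsCompact.of_isClosed_subset
    (isCompact_Icc (a := (0 : Fin m → ℝ)) (b := fun j => b i (cat j))) ?_ ?_
  · simp only [Strat, Set.ofPred_and, Set.ofPred_forall]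
    refine (isClosed_iInter fun j => ?_).inter (isClosed_iInter fun ℓ => ?_)
    · exact isClosed_le (by fun_prop) (by fun_prop)
    · exact isClosed_eq (by fun_prop) (by fun_prop)
  · intro x hx
    refine ⟨hx.1, fun j => ?_⟩
    dsimp only
    rw [← hx.2 (cat j)]
    exact Finset.single_le_sum (f := x) (fun k _ => hx.1 k) (by simp)

/-- Firm `i` may buy all inputs of each category from one representative firm. -/
lemma Strat_nonempty (m l : ℕ) (cat : Fin m → Fin l) (hcat : Function.Surjective cat)
    (b : Fin m → Fin l → ℝ) (hb : ∀ i ℓ, 0 ≤ b i ℓ) (i : Fin m) :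
    (Strat m l cat b i).Nonempty := by
  obtain ⟨r, hr⟩ := hcat.hasRightInverse
  refine ⟨fun j => if j = r (cat j) then b i (cat j) else 0, fun j => ?_, fun ℓ => ?_⟩
  · dsimp only
    split_ifs
    exacts [hb _ _, le_rfl]
  · rw [Finset.sum_eq_single (r ℓ)]
    · simp [hr ℓ]
    · intro j hj hne
      rw [Finset.mem_filter] at hj
      rw [if_neg]
      rwa [hj.2]
    · intro h
      simp [hr ℓ] at h

theorem ordinal_potential_and_nash_exists
    (m l : ℕ) (cat : Fin m → Fin l) (hcat : Function.Surjective cat)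
    (a0 : Fin m → ℝ) (ha0 : ∀ i, 0 < a0 i) (ha0sum : ∑ i, a0 i = 1)
    (b0 : Fin m → ℝ) (hb0 : ∀ i, 0 < b0 i)
    (b : Fin m → Fin l → ℝ) (hb : ∀ i ℓ, 0 ≤ b i ℓ)
    (hble : ∀ i, b0 i + ∑ ℓ, b i ℓ ≤ 1)
    (heps : ∀ i, 0 < eps m l b0 b i) :
    (∃ Φ : (Fin m → Fin m → ℝ) → ℝ,
      ∀ i : Fin m, ∀ a : Fin m → Fin m → ℝ, (∀ j, a j ∈ Strat m l cat b j) →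
        ∀ x ∈ Strat m l cat b i, ∀ y ∈ Strat m l cat b i,
          (0 < payoff m l a0 b0 b i (Function.update a i x)
                - payoff m l a0 b0 b i (Function.update a i y)
            ↔ 0 < Φ (Function.update a i x) - Φ (Function.update a i y)))
    ∧ (∃ abar : Fin m → Fin m → ℝ, (∀ j, abar j ∈ Strat m l cat b j) ∧
        ∀ i : Fin m, ∀ x ∈ Strat m l cat b i,
          payoff m l a0 b0 b i (Function.update abar i x)
            ≤ payoff m l a0 b0 b i abar) := by
  have hdet : ∀ a : Fin m → Fin m → ℝ, (∀ j, a j ∈ Strat m l cat b j) →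
      0 < (1 - AtM m l a0 b0 b a).det := fun a ha =>
    det_one_sub_pos _ (AtM_nonneg m l cat a0 ha0 b0 b heps a ha) fun i => by
      rw [AtM_col_sum m l cat a0 ha0sum b0 b a ha i]
      linarith [hb0 i]
  have hup : ∀ (i : Fin m) (a : Fin m → Fin m → ℝ), (∀ j, a j ∈ Strat m l cat b j) →
      ∀ x ∈ Strat m l cat b i, ∀ j, Function.update a i x j ∈ Strat m l cat b j := by
    intro i a ha x hx j
    by_cases hj : j = i
    · subst hj; simpa using hx
    · simpa [hj] using ha j
  have key : ∀ i : Fin m, ∀ a : Fin m → Fin m → ℝ, (∀ j, a j ∈ Strat m l cat b j) →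
      ∀ x ∈ Strat m l cat b i, ∀ y ∈ Strat m l cat b i,
      (payoff m l a0 b0 b i (Function.update a i y) < payoff m l a0 b0 b i (Function.update a i x)
        ↔ (1 - AtM m l a0 b0 b (Function.update a i x)).det
          < (1 - AtM m l a0 b0 b (Function.update a i y)).det) := by
    intro i a ha x hx y hy
    have hN := numerator_pos m l cat a0 ha0 ha0sum b0 hb0 b heps a ha i
    simp only [payoff, inv_mulVec_eq_cramer_div, updateCol_AtM_update]
    rw [mul_lt_mul_iff_right₀ (heps i), div_lt_div_iff_of_pos_left hN
      (hdet _ (hup i a ha y hy)) (hdet _ (hup i a ha x hx))]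
  refine ⟨⟨fun a => -(1 - AtM m l a0 b0 b a).det, fun i a ha x hx y hy => ?_⟩, ?_⟩
  · rw [sub_pos, sub_pos, neg_lt_neg_iff]
    exact key i a ha x hx y hy
  · have hcpt : IsCompact (Set.univ.pi fun i => Strat m l cat b i) :=
      isCompact_univ_pi fun i => isCompact_Strat m l cat b i
    have hne : (Set.univ.pi fun i => Strat m l cat b i).Nonempty :=
      Set.univ_pi_nonempty_iff.2 fun i => Strat_nonempty m l cat hcat b hb i
    have hcont : Continuous fun a : Fin m → Fin m → ℝ => (1 - AtM m l a0 b0 b a).det := by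
      refine Continuous.matrix_det (continuous_const.sub (continuous_matrix fun j i => ?_))
      simp only [AtM, of_apply]
      fun_prop
    obtain ⟨a, ha, hmin⟩ := hcpt.exists_isMinOn hne hcont.continuousOn
    have ha' : ∀ j, a j ∈ Strat m l cat b j := fun j => ha j (Set.mem_univ j)
    refine ⟨a, ha', fun i x hx => ?_⟩
    by_contra! hlt
    have h := (key i a ha' x hx (a i) (ha' i)).1 (by rwa [Function.update_eq_self])
    rw [Function.update_eq_self] at h
    exact absurd (hmin (show Function.update a i x ∈ Set.univ.pi _ from
      fun j _ => hup i a ha' x hx j)) (not_le.2 h)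

end
end

section
/- Let C be an m×m real matrix with nonnegative entries all of whose row sums are strictly less than 1. Then for all indices j,i ∈ {1,…,m}: (a) the family of weights of all walks from j to i is summable, with sum P_{j,i} = Σ_{k≥0} (C^k)_{j,i} = ((I − C)^{-1})_{j,i}; (b) the family of weights of direct walks from j to i is summable with sum D_{j,i}, the family of weights of direct cycles around i is summable with sum D_{i,i}, and D_{i,i} < 1; (c) for j ≠ i, P_{j,i} = D_{j,i} / (1 − D_{i,i}), and P_{i,i} = 1 / (1 − D_{i,i}). -/
/-!
The walks from `j` to `i` with `k` steps form a finite set whose weights add up to `(C ^ k) j i`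
(induct on `k`, splitting off the first step), and all terms are nonnegative, so summing over all
walks amounts to summing the Neumann series. It converges to the resolvent `R = (1 - C)⁻¹`
because the row sum hypothesis says that the `ℓ^∞` operator norm of `C` is less than one.

Direct walks are handled by the same result, applied to the matrix `C'` obtained from `C` by
replacing row `i` with zero: its walk weights vanish on every walk that visits `i` before the end
and agree with those of `C` on all others. With `R' = (1 - C')⁻¹`, the direct walks from `j ≠ i`
to `i` therefore have total weight `R' j i`, and splitting off the first step gives total weight
`d = (C * R') i i` for the direct cycles around `i`. Since `C - C'` is supported on row `i`, the
resolvent identity `R - R' = R * (C - C') * R'` reads `R j i = R' j i + R j i * d` in column `i`.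
Moreover `R' i i = 1`, as row `i` of `C'` is zero. So `R i i * (1 - d) = 1` with `R i i ≥ 0`,
which forces `d < 1`, and the quotient formulas follow.
-/

/-!
Walks in an m×m nonnegative matrix C: a walk from j to i is a nonempty list
p = (h_1,…,h_k) of indices with head j and last element i; its weight is
∏_{t} C_{h_t,h_{t+1}} (empty product = 1 for k = 1). A walk is *direct* if
no intermediate element (positions 2,…,k−1) equals i; a direct walk from i
to i of length ≥ 2 is a *direct cycle around i*.

STATEMENT 4: if all row sums of C are < 1 then (a) the weights of walks from
j to i are summable with sum P_{j,i} = Σ_k (C^k)_{j,i} = ((I−C)⁻¹)_{j,i};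
(b) the weights of direct walks are summable (sum D_{j,i}) and D_{i,i} < 1;
(c) P_{j,i} = D_{j,i}/(1 − D_{i,i}) for j ≠ i, and P_{i,i} = 1/(1 − D_{i,i}).
-/

noncomputable section

open Matrix

/-- Weight of a walk: product of matrix entries along consecutive pairs. -/
def wweight {m : ℕ} (C : Matrix (Fin m) (Fin m) ℝ) (p : List (Fin m)) : ℝ :=
  ((p.zip p.tail).map fun q => C q.1 q.2).prod

/-- `p` is a walk from `j` to `i`. -/
def IsWalk {m : ℕ} (j i : Fin m) (p : List (Fin m)) : Prop :=
  p ≠ [] ∧ p.head? = some j ∧ p.getLast? = some i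

/-- `p` is a direct walk from `j` to `i`: no intermediate node equals `i`. -/
def IsDirectWalk {m : ℕ} (j i : Fin m) (p : List (Fin m)) : Prop :=
  IsWalk j i p ∧ ∀ q ∈ p.tail.dropLast, q ≠ i

/-- `p` is a direct cycle around `i`. -/
def IsDirectCycle {m : ℕ} (i : Fin m) (p : List (Fin m)) : Prop :=
  IsDirectWalk i i p ∧ 2 ≤ p.length

/-! ### Walks and their weights -/

theorem wweight_cons_cons {m : ℕ} (C : Matrix (Fin m) (Fin m) ℝ) (a b : Fin m)
    (l : List (Fin m)) : wweight C (a :: b :: l) = C a b * wweight C (b :: l) := by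
  simp [wweight]

theorem wweight_singleton {m : ℕ} (C : Matrix (Fin m) (Fin m) ℝ) (a : Fin m) :
    wweight C [a] = 1 := by
  simp [wweight]

theorem wweight_nonneg {m : ℕ} {C : Matrix (Fin m) (Fin m) ℝ} (hC : ∀ i j, 0 ≤ C i j)
    (p : List (Fin m)) : 0 ≤ wweight C p := by
  refine List.prod_nonneg fun x hx => ?_
  obtain ⟨q, -, rfl⟩ := List.mem_map.1 hx
  exact hC _ _

theorem isWalk_singleton {m : ℕ} {j i a : Fin m} : IsWalk j i [a] ↔ a = j ∧ a = i := by
  simp [IsWalk]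

theorem isWalk_cons_cons {m : ℕ} {j i a b : Fin m} {l : List (Fin m)} :
    IsWalk j i (a :: b :: l) ↔ a = j ∧ IsWalk b i (b :: l) := by
  simp [IsWalk]

theorem IsWalk.exists_cons {m : ℕ} {j i : Fin m} {p : List (Fin m)} (h : IsWalk j i p) :
    ∃ l, p = j :: l := by
  rcases p with _ | ⟨a, l⟩
  · exact absurd rfl h.1
  · have := h.2.1
    simp only [List.head?_cons, Option.some.injEq] at this
    exact ⟨l, by rw [this]⟩

/-! ### Walks with a given number of steps -/

/-- The finite set of walks from `j` to `i` with `k` steps, that is, with `k + 1` vertices. -/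
def walksOfLength {m : ℕ} (i : Fin m) : ℕ → Fin m → Finset (List (Fin m))
  | 0, j => if j = i then {[i]} else ∅
  | k + 1, j => Finset.univ.biUnion fun h => (walksOfLength i k h).image (List.cons j)

theorem mem_walksOfLength {m : ℕ} {i : Fin m} {k : ℕ} {j : Fin m} {p : List (Fin m)} :
    p ∈ walksOfLength i k j ↔ IsWalk j i p ∧ p.length = k + 1 := by
  induction k generalizing j p with
  | zero =>
    rcases p with _ | ⟨a, _ | ⟨b, l⟩⟩
    · by_cases h : j = i <;> simp [walksOfLength, IsWalk, h]
    · by_cases h : j = i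
      · simp [walksOfLength, isWalk_singleton, h]
      · simp only [walksOfLength, isWalk_singleton, h, if_false, Finset.notMem_empty, false_iff]
        rintro ⟨⟨rfl, rfl⟩, -⟩
        exact h rfl
    · by_cases h : j = i <;> simp [walksOfLength, h]
  | succ k ih =>
    simp only [walksOfLength, Finset.mem_biUnion, Finset.mem_univ, true_and, Finset.mem_image, ih]
    constructor
    · rintro ⟨h, q, ⟨hq, hl⟩, rfl⟩
      obtain ⟨l, rfl⟩ := hq.exists_cons
      exact ⟨isWalk_cons_cons.2 ⟨rfl, hq⟩, by simpa using hl⟩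
    · rintro ⟨hp, hl⟩
      rcases p with _ | ⟨a, _ | ⟨b, l⟩⟩
      · simp at hl
      · simp at hl
      · obtain ⟨rfl, hw⟩ := isWalk_cons_cons.1 hp
        exact ⟨b, b :: l, ⟨hw, by simpa using hl⟩, rfl⟩

theorem sum_walksOfLength {m : ℕ} (C : Matrix (Fin m) (Fin m) ℝ) (i : Fin m) (k : ℕ)
    (j : Fin m) : ∑ p ∈ walksOfLength i k j, wweight C p = (C ^ k) j i := by
  induction k generalizing j with
  | zero =>
    by_cases h : j = i
    · simp [walksOfLength, h, wweight_singleton]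
    · simp [walksOfLength, h]
  | succ k ih =>
    rw [walksOfLength, Finset.sum_biUnion, pow_succ', Matrix.mul_apply]
    · refine Finset.sum_congr rfl fun h _ => ?_
      rw [Finset.sum_image (List.cons_injective.injOn), ← ih h, Finset.mul_sum]
      refine Finset.sum_congr rfl fun q hq => ?_
      obtain ⟨l, rfl⟩ := (mem_walksOfLength.1 hq).1.exists_cons
      rw [wweight_cons_cons]
    · intro a _ b _ hab
      refine Finset.disjoint_left.2 fun p hp hp' => hab ?_
      obtain ⟨q, hq, rfl⟩ := Finset.mem_image.1 hp
      obtain ⟨q', hq', he⟩ := Finset.mem_image.1 hp'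
      obtain rfl : q' = q := List.cons_injective he
      have h1 := (mem_walksOfLength.1 hq).1.2.1
      have h2 := (mem_walksOfLength.1 hq').1.2.1
      exact Option.some.inj (h1.symm.trans h2)

/-! ### The Neumann series and the sum over all walks -/

/-- The Neumann series: the row sum hypothesis is `‖C‖ < 1` for the `ℓ^∞` operator norm. -/
theorem hasSum_pow_and_inv {m : ℕ} {C : Matrix (Fin m) (Fin m) ℝ} (hC : ∀ i j, 0 ≤ C i j)
    (hrow : ∀ i, ∑ j, C i j < 1) :
    (∀ j i, HasSum (fun k : ℕ => (C ^ k) j i) ((1 - C)⁻¹ j i)) ∧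
      (1 - C)⁻¹ * (1 - C) = 1 ∧ (1 - C) * (1 - C)⁻¹ = 1 := by
  -- The norm is local to this block, so that the algebraic operations outside of it are the
  -- standard ones on matrices.
  obtain ⟨hs, hl⟩ : (Summable fun k : ℕ => C ^ k) ∧ (∑' k : ℕ, C ^ k) * (1 - C) = 1 := by
    let _ : NormedRing (Matrix (Fin m) (Fin m) ℝ) := Matrix.linftyOpNormedRing
    have hn : ‖C‖ < 1 := by
      rw [Matrix.linfty_opNorm_def, ← NNReal.coe_one, NNReal.coe_lt_coe,
        Finset.sup_lt_iff (by simp)]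
      intro a _
      rw [← NNReal.coe_lt_coe]
      push_cast
      simpa only [Real.norm_of_nonneg (hC _ _)] using hrow a
    have : @CompleteSpace (Matrix (Fin m) (Fin m) ℝ)
        Matrix.linftyOpNormedRing.toMetricSpace.toUniformSpace :=
      inferInstanceAs (CompleteSpace (Fin m → Fin m → ℝ))
    have hs : Summable fun k : ℕ => C ^ k := summable_geometric_of_norm_lt_one hn
    exact ⟨hs, hs.tsum_pow_mul_one_sub⟩
  have hinv : (1 - C)⁻¹ = ∑' k : ℕ, C ^ k := Matrix.inv_eq_left_inv hl
  rw [hinv]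
  refine ⟨fun j i => ?_, hl, mul_eq_one_comm.1 hl⟩
  exact Pi.hasSum.1 (Pi.hasSum.1 hs.hasSum j) i

theorem hasSum_walks {m : ℕ} {C : Matrix (Fin m) (Fin m) ℝ} (hC : ∀ i j, 0 ≤ C i j)
    (hrow : ∀ i, ∑ j, C i j < 1) (j i : Fin m) :
    HasSum (fun p : {p : List (Fin m) // IsWalk j i p} => wweight C p.1) ((1 - C)⁻¹ j i) := by
  let φ : (Σ k, {p // p ∈ walksOfLength i k j}) → {p : List (Fin m) // IsWalk j i p} :=
    fun s => ⟨s.2.1, (mem_walksOfLength.1 s.2.2).1⟩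
  have hφ : Function.Bijective φ := by
    constructor
    · rintro ⟨k, p, hp⟩ ⟨k', p', hp'⟩ h
      obtain rfl : p = p' := congrArg Subtype.val h
      obtain rfl : k = k' := by
        have h1 := (mem_walksOfLength.1 hp).2
        have h2 := (mem_walksOfLength.1 hp').2
        omega
      rfl
    · rintro ⟨p, hp⟩
      have hl : 0 < p.length := List.length_pos_iff.2 hp.1
      exact ⟨⟨p.length - 1, p, mem_walksOfLength.2 ⟨hp, by omega⟩⟩, rfl⟩
  rw [← (Equiv.ofBijective φ hφ).hasSum_iff]
  have hk : ∀ k, HasSum (fun p : {p // p ∈ walksOfLength i k j} => wweight C p.1)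
      ((C ^ k) j i) := fun k => by
    rw [← sum_walksOfLength]
    exact Finset.hasSum _ _
  have hpow := (hasSum_pow_and_inv hC hrow).1 j i
  refine HasSum.sigma_of_hasSum hpow hk ?_
  refine (summable_sigma_of_nonneg fun s => wweight_nonneg hC _).2
    ⟨fun k => (hk k).summable, ?_⟩
  exact hpow.summable.congr fun k => (hk k).tsum_eq.symm

/-! ### Direct walks and direct cycles -/

/-- The matrix `C` with row `i` replaced by zero: a walk may enter `i` but not leave it. -/
def killRow {m : ℕ} (C : Matrix (Fin m) (Fin m) ℝ) (i : Fin m) : Matrix (Fin m) (Fin m) ℝ :=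
  Matrix.of fun a b => if a = i then 0 else C a b

theorem killRow_nonneg {m : ℕ} {C : Matrix (Fin m) (Fin m) ℝ} (hC : ∀ i j, 0 ≤ C i j)
    (i a b : Fin m) : 0 ≤ killRow C i a b := by
  by_cases h : a = i <;> simp [killRow, h, hC]

theorem killRow_sum_lt {m : ℕ} {C : Matrix (Fin m) (Fin m) ℝ}
    (hrow : ∀ i, ∑ j, C i j < 1) (i a : Fin m) : ∑ b, killRow C i a b < 1 := by
  by_cases h : a = i <;> simp [killRow, h, hrow]

theorem wweight_killRow_of_avoid {m : ℕ} (C : Matrix (Fin m) (Fin m) ℝ) (i : Fin m)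
    (p : List (Fin m)) (hp : ∀ q ∈ p.dropLast, q ≠ i) :
    wweight (killRow C i) p = wweight C p := by
  induction p with
  | nil => rfl
  | cons a l ih =>
    rcases l with _ | ⟨b, l⟩
    · simp [wweight_singleton]
    · simp only [List.dropLast_cons_cons, List.mem_cons, forall_eq_or_imp] at hp
      rw [wweight_cons_cons, wweight_cons_cons, ih hp.2]
      simp [killRow, hp.1]

theorem wweight_killRow_of_visit {m : ℕ} (C : Matrix (Fin m) (Fin m) ℝ) (i : Fin m)
    (p : List (Fin m)) (hp : ¬ ∀ q ∈ p.dropLast, q ≠ i) :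
    wweight (killRow C i) p = 0 := by
  induction p with
  | nil => simp at hp
  | cons a l ih =>
    rcases l with _ | ⟨b, l⟩
    · simp at hp
    · simp only [List.dropLast_cons_cons, List.mem_cons, forall_eq_or_imp] at hp
      rw [wweight_cons_cons]
      by_cases ha : a = i
      · simp [killRow, ha]
      · rw [ih fun h => hp ⟨ha, h⟩, mul_zero]

/-- For `j ≠ i` the start of a walk is not its end, so directness means that `i` occurs nowhere
before the last position. -/
theorem isDirectWalk_iff {m : ℕ} {j i : Fin m} (hji : j ≠ i) {p : List (Fin m)} :
    IsDirectWalk j i p ↔ IsWalk j i p ∧ ∀ q ∈ p.dropLast, q ≠ i := by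
  refine and_congr_right fun hp => ?_
  obtain ⟨_ | ⟨b, l⟩, rfl⟩ := hp.exists_cons
  · simp
  · simp [hji]

theorem hasSum_directWalks {m : ℕ} {C : Matrix (Fin m) (Fin m) ℝ} (hC : ∀ i j, 0 ≤ C i j)
    (hrow : ∀ i, ∑ j, C i j < 1) {j i : Fin m} (hji : j ≠ i) :
    HasSum (fun p : {p : List (Fin m) // IsDirectWalk j i p} => wweight C p.1)
      ((1 - killRow C i)⁻¹ j i) := by
  have h := hasSum_walks (killRow_nonneg hC i) (killRow_sum_lt hrow i) j i
  rw [← (Subtype.map_injective (fun _ hp => hp.1) Function.injective_id :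
    Function.Injective (Subtype.map id fun p (hp : IsDirectWalk j i p) => hp.1)).hasSum_iff] at h
  · convert h using 2 with p
    exact (wweight_killRow_of_avoid C i p.1 ((isDirectWalk_iff hji).1 p.2).2).symm
  · rintro ⟨p, hp⟩ hr
    refine wweight_killRow_of_visit C i p fun hd => hr ⟨⟨p, (isDirectWalk_iff hji).2 ⟨hp, hd⟩⟩, rfl⟩

/-- A direct cycle around `i` is a first step to some `h`, followed by a walk from `h` to `i` that
does not visit `i` before its end. -/
theorem hasSum_directCycles {m : ℕ} {C : Matrix (Fin m) (Fin m) ℝ} (hC : ∀ i j, 0 ≤ C i j)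
    (hrow : ∀ i, ∑ j, C i j < 1) (i : Fin m) :
    HasSum (fun p : {p : List (Fin m) // IsDirectCycle i p} => wweight C p.1)
      ((C * (1 - killRow C i)⁻¹) i i) := by
  have hw := fun h => (hasSum_walks (killRow_nonneg hC i) (killRow_sum_lt hrow i) h i).mul_left
    (C i h)
  have hS : HasSum (fun s : Σ h, {q : List (Fin m) // IsWalk h i q} =>
      C i s.1 * wweight (killRow C i) s.2.1) ((C * (1 - killRow C i)⁻¹) i i) := by
    rw [Matrix.mul_apply]
    refine HasSum.sigma_of_hasSum (hasSum_fintype _) hw ?_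
    exact (summable_sigma_of_nonneg fun s =>
      mul_nonneg (hC _ _) (wweight_nonneg (killRow_nonneg hC i) _)).2
      ⟨fun h => (hw h).summable, (hasSum_fintype _).summable⟩
  let A : Set (Σ h, {q : List (Fin m) // IsWalk h i q}) :=
    {s | ∀ x ∈ s.2.1.dropLast, x ≠ i}
  have hA : HasSum (fun s : A =>
      C i s.1.1 * wweight (killRow C i) s.1.2.1) ((C * (1 - killRow C i)⁻¹) i i) := by
    refine (Subtype.val_injective.hasSum_iff fun s hs => ?_).2 hS
    rw [wweight_killRow_of_visit C i _ fun h => hs ⟨⟨s, h⟩, rfl⟩, mul_zero]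
  let φ : A → {p : List (Fin m) // IsDirectCycle i p} := fun s => ⟨i :: s.1.2.1, by
    obtain ⟨⟨h, q, hq⟩, hs⟩ := s
    obtain ⟨l, rfl⟩ := hq.exists_cons
    exact ⟨⟨isWalk_cons_cons.2 ⟨rfl, hq⟩, hs⟩, by simp⟩⟩
  have hφ : Function.Bijective φ := by
    constructor
    · rintro ⟨⟨h, q, hq⟩, hs⟩ ⟨⟨h', q', hq'⟩, hs'⟩ he
      obtain rfl : q = q' := List.cons_injective (congrArg Subtype.val he)
      obtain rfl : h = h' := Option.some.inj (hq.2.1.symm.trans hq'.2.1)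
      rfl
    · rintro ⟨p, ⟨hp, hd⟩, hl⟩
      rcases p with _ | ⟨a, _ | ⟨b, l⟩⟩
      · simp at hl
      · simp at hl
      · obtain ⟨rfl, hq⟩ := isWalk_cons_cons.1 hp
        exact ⟨⟨⟨b, b :: l, hq⟩, hd⟩, rfl⟩
  rw [← (Equiv.ofBijective φ hφ).hasSum_iff]
  convert hA using 2 with s
  obtain ⟨⟨h, q, hq⟩, hs⟩ := s
  obtain ⟨l, rfl⟩ := hq.exists_cons
  change wweight C (i :: h :: l) = C i h * wweight (killRow C i) (h :: l)
  rw [wweight_cons_cons, wweight_killRow_of_avoid C i _ hs]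

/-! ### The resolvent identity -/

/-- Column `i` of the resolvent identity `R - R' = R * (C - C') * R'`, where `C - C'` is supported
on row `i`. -/
theorem resolvent_mul_one_sub {m : ℕ} {C : Matrix (Fin m) (Fin m) ℝ} (hC : ∀ i j, 0 ≤ C i j)
    (hrow : ∀ i, ∑ j, C i j < 1) (j i : Fin m) :
    (1 - C)⁻¹ j i * (1 - (C * (1 - killRow C i)⁻¹) i i) = (1 - killRow C i)⁻¹ j i := by
  have h1 := (hasSum_pow_and_inv hC hrow).2.1
  have h2 := (hasSum_pow_and_inv (killRow_nonneg hC i) (killRow_sum_lt hrow i)).2.2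
  set R := (1 - C)⁻¹
  set R' := (1 - killRow C i)⁻¹
  have hres : R = R' + R * ((C - killRow C i) * R') := by
    calc R = R * ((1 - killRow C i) * R') := by rw [h2, mul_one]
      _ = (R * (1 - C)) * R' + R * ((C - killRow C i) * R') := by noncomm_ring
      _ = _ := by rw [h1, one_mul]
  have hrow' : ∀ a, ((C - killRow C i) * R') a i = if a = i then (C * R') i i else 0 := by
    intro a
    by_cases h : a = i <;> simp [Matrix.mul_apply, killRow, h]
  have := congrFun (congrFun hres j) i
  rw [Matrix.add_apply, Matrix.mul_apply (M := R)] at this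
  simp only [hrow', mul_ite, mul_zero, Finset.sum_ite_eq', Finset.mem_univ, if_true] at this
  linarith

theorem killRow_inv_diag {m : ℕ} {C : Matrix (Fin m) (Fin m) ℝ} (hC : ∀ i j, 0 ≤ C i j)
    (hrow : ∀ i, ∑ j, C i j < 1) (i : Fin m) : (1 - killRow C i)⁻¹ i i = 1 := by
  have h2 := (hasSum_pow_and_inv (killRow_nonneg hC i) (killRow_sum_lt hrow i)).2.2
  have h3 : (killRow C i * (1 - killRow C i)⁻¹) i i = 0 := by simp [Matrix.mul_apply, killRow]
  have := congrFun (congrFun h2 i) i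
  rw [sub_mul, one_mul, Matrix.sub_apply, h3, Matrix.one_apply_eq, sub_zero] at this
  exact this

theorem inv_diag_nonneg {m : ℕ} {C : Matrix (Fin m) (Fin m) ℝ} (hC : ∀ i j, 0 ≤ C i j)
    (hrow : ∀ i, ∑ j, C i j < 1) (i : Fin m) : 0 ≤ (1 - C)⁻¹ i i := by
  rw [← (hasSum_walks hC hrow i i).tsum_eq]
  exact tsum_nonneg fun p => wweight_nonneg hC p.1

theorem summable_directWalks {m : ℕ} {C : Matrix (Fin m) (Fin m) ℝ} (hC : ∀ i j, 0 ≤ C i j)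
    (hrow : ∀ i, ∑ j, C i j < 1) (j i : Fin m) :
    Summable (fun p : {p : List (Fin m) // IsDirectWalk j i p} => wweight C p.1) := by
  have h := (hasSum_walks hC hrow j i).summable.comp_injective
    (Subtype.map_injective (fun _ hp => hp.1) Function.injective_id :
      Function.Injective (Subtype.map id fun p (hp : IsDirectWalk j i p) => hp.1))
  exact h.congr fun p => rfl

theorem walk_weight_sums (m : ℕ) (C : Matrix (Fin m) (Fin m) ℝ)
    (hC : ∀ i j, 0 ≤ C i j) (hrow : ∀ i, ∑ j, C i j < 1) (j i : Fin m) :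
    -- (a)
    (HasSum (fun p : {p : List (Fin m) // IsWalk j i p} => wweight C p.1)
        (∑' k : ℕ, (C ^ k) j i)
      ∧ HasSum (fun k : ℕ => (C ^ k) j i) (((1 - C)⁻¹) j i))
    -- (b)
    ∧ (Summable (fun p : {p : List (Fin m) // IsDirectWalk j i p} => wweight C p.1)
        ∧ Summable (fun p : {p : List (Fin m) // IsDirectCycle i p} => wweight C p.1)
        ∧ (∑' p : {p : List (Fin m) // IsDirectCycle i p}, wweight C p.1) < 1)
    -- (c)
    ∧ ((j ≠ i →
          (∑' p : {p : List (Fin m) // IsWalk j i p}, wweight C p.1)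
            = (∑' p : {p : List (Fin m) // IsDirectWalk j i p}, wweight C p.1)
              / (1 - ∑' p : {p : List (Fin m) // IsDirectCycle i p}, wweight C p.1))
        ∧ (∑' p : {p : List (Fin m) // IsWalk i i p}, wweight C p.1)
            = 1 / (1 - ∑' p : {p : List (Fin m) // IsDirectCycle i p}, wweight C p.1)) := by
  have hpow := (hasSum_pow_and_inv hC hrow).1 j i
  have hcyc := hasSum_directCycles hC hrow i
  have hii := resolvent_mul_one_sub hC hrow i i
  rw [killRow_inv_diag hC hrow i] at hii
  have hRnn := inv_diag_nonneg hC hrow i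
  have hlt : 0 < 1 - (C * (1 - killRow C i)⁻¹) i i :=
    pos_of_mul_pos_right (by rw [hii]; exact one_pos) hRnn
  have hdir := summable_directWalks hC hrow j i
  have hP := fun a => (hasSum_walks hC hrow a i).tsum_eq
  refine And.intro (And.intro ?_ hpow) (And.intro (And.intro hdir (And.intro hcyc.summable ?_))
    (And.intro ?_ ?_))
  · rw [hpow.tsum_eq]
    exact hasSum_walks hC hrow j i
  · rw [hcyc.tsum_eq]
    linarith
  · intro hji
    rw [hP j, (hasSum_directWalks hC hrow hji).tsum_eq, hcyc.tsum_eq, eq_div_iff hlt.ne']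
    exact resolvent_mul_one_sub hC hrow j i
  · rw [hP i, hcyc.tsum_eq, eq_div_iff hlt.ne', hii]

end
end
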